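/- Let M and M̂ be two finite MDPs differing only in transition kernels P and P̂, with rewards bounded by R_max ≥ 0 and discount γ ∈ [0,1). For any policy π, η_M(π) − η_{M̂}(π) ≥ −(2γ R_max/(1−γ)^2) · E_{(s,a)~ρ̂}[ D_TV( P(·|s,a), P̂(·|s,a) ) ], where D_TV is total variation distance and ρ̂ is the normalized discounted occupancy of π under M̂. -/

import Mathlib

open Finset

/-- One-step evolution of a state-action distribution under kernel `P` and policy `pol`. -/
noncomputable def stepDist {S A : Type*} [Fintype S] [Fintype A]
    (P : S → A → S → ℝ) (pol : S → A → ℝ) (d : S → A → ℝ) : S → A → ℝ :=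
  fun s' a' => (∑ s, ∑ a, d s a * P s a s') * pol s' a'

/-- State-action distribution at time `t` when starting from `ρ0` and following `pol` in `P`. -/
noncomputable def traj {S A : Type*} [Fintype S] [Fintype A]
    (P : S → A → S → ℝ) (pol : S → A → ℝ) (ρ0 : S → ℝ) : ℕ → S → A → ℝ :=
  fun t => (stepDist P pol)^[t] (fun s a => ρ0 s * pol s a)

/-- Discounted return `η_M(π)` of policy `pol` in the MDP with kernel `P`. -/
noncomputable def ret {S A : Type*} [Fintype S] [Fintype A]
    (P : S → A → S → ℝ) (pol : S → A → ℝ) (ρ0 : S → ℝ) (r : S → A → ℝ) (γ : ℝ) : ℝ :=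
  ∑' t : ℕ, γ ^ t * ∑ s, ∑ a, traj P pol ρ0 t s a * r s a

/-- Value function `V^π_M(s)`. -/
noncomputable def Vf {S A : Type*} [Fintype S] [Fintype A] [DecidableEq S]
    (P : S → A → S → ℝ) (pol : S → A → ℝ) (r : S → A → ℝ) (γ : ℝ) (s0 : S) : ℝ :=
  ret P pol (fun s => if s = s0 then 1 else 0) r γ

/-- Normalized discounted state-action occupancy `ρ̂(s,a)` of `pol` in kernel `P`. -/
noncomputable def occ {S A : Type*} [Fintype S] [Fintype A]
    (P : S → A → S → ℝ) (pol : S → A → ℝ) (ρ0 : S → ℝ) (γ : ℝ) : S → A → ℝ :=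
  fun s a => (1 - γ) * ∑' t : ℕ, γ ^ t * traj P pol ρ0 t s a

/-!
Write `V` for the value function of `P`. Evaluating the action values `r + γ P V` of `P` along the
trajectories of `Phat` gives the telescoping identity
`η_P - η_Phat = γ * ∑ t, γ ^ t * 𝔼_Phat[∑ s', (P - Phat)(s_t, a_t, s') * V s']`.
Hölder's inequality with `‖V‖_∞ ≤ Rmax / (1 - γ)` bounds each inner sum by `2 Rmax / (1 - γ)` times
a total variation distance, and the remaining discounted sum is `1 / (1 - γ)` times an expectation
under the occupancy.
-/

/-- Sub-probability vectors on a finite type. Missing mass is the probability that the process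
stops, so kernels and policies with such rows include those of episodic decision processes. -/
structure IsSubprob {X : Type*} [Fintype X] (p : X → ℝ) : Prop where
  nonneg : ∀ x, 0 ≤ p x
  sum_le_one : ∑ x, p x ≤ 1

section FiniteSums

variable {X Y : Type*} [Fintype X]

theorem abs_sum_mul_le {w f : X → ℝ} {C : ℝ} (hf : ∀ x, |f x| ≤ C) :
    |∑ x, w x * f x| ≤ C * ∑ x, |w x| := by
  calc |∑ x, w x * f x| ≤ ∑ x, |w x * f x| := abs_sum_le_sum_abs _ _
    _ ≤ ∑ x, C * |w x| := by
      gcongr with x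
      rw [abs_mul, mul_comm]
      gcongr
      exact hf x
    _ = C * ∑ x, |w x| := (mul_sum ..).symm

theorem abs_sum_sum_mul_le [Fintype Y] {w f : X → Y → ℝ} {C : ℝ} (hf : ∀ x y, |f x y| ≤ C) :
    |∑ x, ∑ y, w x y * f x y| ≤ C * ∑ x, ∑ y, |w x y| := by
  simpa only [Fintype.sum_prod_type] using
    abs_sum_mul_le (w := fun z : X × Y => w z.1 z.2) (f := fun z => f z.1 z.2)
      fun z => hf z.1 z.2

theorem sum_sum_abs_mul_le [Fintype Y] {K : X → Y → ℝ} (hK : ∀ x, IsSubprob (K x)) (d : X → ℝ) :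
    ∑ x, ∑ y, |d x * K x y| ≤ ∑ x, |d x| := by
  gcongr with x
  calc ∑ y, |d x * K x y| = |d x| * ∑ y, K x y := by
        simp only [abs_mul, abs_of_nonneg ((hK x).nonneg _), mul_sum]
    _ ≤ |d x| := mul_le_of_le_one_right (abs_nonneg _) (hK x).sum_le_one

theorem sum_abs_sum_mul_le [Fintype Y] {K : X → Y → ℝ} (hK : ∀ x, IsSubprob (K x)) (d : X → ℝ) :
    ∑ y, |∑ x, d x * K x y| ≤ ∑ x, |d x| := by
  calc ∑ y, |∑ x, d x * K x y| ≤ ∑ y, ∑ x, |d x * K x y| :=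
        sum_le_sum fun _ _ => abs_sum_le_sum_abs _ _
    _ = ∑ x, ∑ y, |d x * K x y| := sum_comm
    _ ≤ ∑ x, |d x| := sum_sum_abs_mul_le hK d

end FiniteSums

section DiscountedSeries

variable {γ C : ℝ} {f : ℕ → ℝ}

theorem abs_pow_mul_le (hγ0 : 0 ≤ γ) (hf : ∀ t, |f t| ≤ C) (t : ℕ) :
    |γ ^ t * f t| ≤ γ ^ t * C := by
  rw [abs_mul, abs_of_nonneg (pow_nonneg hγ0 t)]
  gcongr
  exact hf t

theorem summable_pow_mul (hγ0 : 0 ≤ γ) (hγ1 : γ < 1) (hf : ∀ t, |f t| ≤ C) :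
    Summable fun t => γ ^ t * f t :=
  ((summable_geometric_of_lt_one hγ0 hγ1).mul_right C).of_norm_bounded (abs_pow_mul_le hγ0 hf)

theorem abs_tsum_pow_mul_le (hγ0 : 0 ≤ γ) (hγ1 : γ < 1) (hf : ∀ t, |f t| ≤ C) :
    |∑' t, γ ^ t * f t| ≤ C / (1 - γ) := by
  rw [div_eq_inv_mul, ← Real.norm_eq_abs]
  exact tsum_of_norm_bounded ((hasSum_geometric_of_lt_one hγ0 hγ1).mul_right C)
    fun t => abs_pow_mul_le hγ0 hf t

end DiscountedSeries

section DecisionProcess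

variable {S A : Type*} [Fintype S] [Fintype A] {P : S → A → S → ℝ} {pol : S → A → ℝ} {γ : ℝ}

/-- The distribution of the state after one step from the state distribution `ρ0`. -/
noncomputable def nextDist (P : S → A → S → ℝ) (pol : S → A → ℝ) (ρ0 : S → ℝ) : S → ℝ :=
  fun s' => ∑ s, ∑ a, ρ0 s * pol s a * P s a s'

theorem nextDist_dirac [DecidableEq S] (P : S → A → S → ℝ) (pol : S → A → ℝ) (s s' : S) :
    nextDist P pol (fun x => if x = s then 1 else 0) s' = ∑ a, pol s a * P s a s' := by
  simp [nextDist, sum_ite_irrel]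

/-- The action-value function `Q^π_M(s, a)`: the reward of `(s, a)` plus the discounted expected
value of its successor state. -/
noncomputable def Qf [DecidableEq S] (P : S → A → S → ℝ) (pol r : S → A → ℝ) (γ : ℝ) :
    S → A → ℝ :=
  fun s a => r s a + γ * ∑ s', P s a s' * Vf P pol r γ s'

theorem traj_zero (P : S → A → S → ℝ) (pol : S → A → ℝ) (ρ0 : S → ℝ) (s : S) (a : A) :
    traj P pol ρ0 0 s a = ρ0 s * pol s a :=
  rfl

theorem traj_succ (P : S → A → S → ℝ) (pol : S → A → ℝ) (ρ0 : S → ℝ) (t : ℕ) :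
    traj P pol ρ0 (t + 1) = traj P pol (nextDist P pol ρ0) t :=
  rfl

theorem traj_succ' (P : S → A → S → ℝ) (pol : S → A → ℝ) (ρ0 : S → ℝ) (t : ℕ) :
    traj P pol ρ0 (t + 1) = stepDist P pol (traj P pol ρ0 t) :=
  Function.iterate_succ_apply' _ _ _

theorem traj_nonneg (hP : ∀ s a s', 0 ≤ P s a s') (hpol : ∀ s a, 0 ≤ pol s a) {ρ0 : S → ℝ}
    (hρ0 : ∀ s, 0 ≤ ρ0 s) (t : ℕ) (s : S) (a : A) : 0 ≤ traj P pol ρ0 t s a := by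
  induction t generalizing s a with
  | zero => exact mul_nonneg (hρ0 s) (hpol s a)
  | succ t ih =>
    rw [traj_succ']
    exact mul_nonneg (sum_nonneg fun x _ => sum_nonneg fun y _ => mul_nonneg (ih x y) (hP x y s))
      (hpol s a)

theorem traj_eq_sum_dirac [DecidableEq S] (P : S → A → S → ℝ) (pol : S → A → ℝ) (ρ0 : S → ℝ)
    (t : ℕ) (s : S) (a : A) :
    traj P pol ρ0 t s a
      = ∑ s0, ρ0 s0 * traj P pol (fun s => if s = s0 then 1 else 0) t s a := by
  induction t generalizing s a with
  | zero => simp [traj_zero]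
  | succ t ih =>
    simp only [traj_succ', stepDist, ih, sum_mul, mul_sum, mul_assoc]
    rw [sum_comm_cycle]

theorem sum_abs_stepDist_le (hP : ∀ s a, IsSubprob (P s a)) (hpol : ∀ s, IsSubprob (pol s))
    (d : S → A → ℝ) : ∑ s, ∑ a, |stepDist P pol d s a| ≤ ∑ s, ∑ a, |d s a| := by
  calc ∑ s, ∑ a, |stepDist P pol d s a| ≤ ∑ s', |∑ s, ∑ a, d s a * P s a s'| :=
        sum_sum_abs_mul_le hpol _
    _ ≤ ∑ s, ∑ a, |d s a| := by
      simpa only [Fintype.sum_prod_type] using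
        sum_abs_sum_mul_le (K := fun z : S × A => P z.1 z.2) (fun z => hP z.1 z.2)
          (fun z => d z.1 z.2)

theorem sum_abs_traj_le (hP : ∀ s a, IsSubprob (P s a)) (hpol : ∀ s, IsSubprob (pol s))
    (ρ0 : S → ℝ) (t : ℕ) : ∑ s, ∑ a, |traj P pol ρ0 t s a| ≤ ∑ s, |ρ0 s| := by
  induction t with
  | zero => exact sum_sum_abs_mul_le hpol ρ0
  | succ t ih =>
    rw [traj_succ']
    exact (sum_abs_stepDist_le hP hpol _).trans ih

theorem abs_sum_traj_mul_le (hP : ∀ s a, IsSubprob (P s a)) (hpol : ∀ s, IsSubprob (pol s))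
    (ρ0 : S → ℝ) {r : S → A → ℝ} {R : ℝ} (hR : 0 ≤ R) (hr : ∀ s a, |r s a| ≤ R) (t : ℕ) :
    |∑ s, ∑ a, traj P pol ρ0 t s a * r s a| ≤ R * ∑ s, |ρ0 s| :=
  (abs_sum_sum_mul_le hr).trans (mul_le_mul_of_nonneg_left (sum_abs_traj_le hP hpol ρ0 t) hR)

theorem abs_Vf_le [DecidableEq S] (hP : ∀ s a, IsSubprob (P s a)) (hpol : ∀ s, IsSubprob (pol s))
    (hγ0 : 0 ≤ γ) (hγ1 : γ < 1) {r : S → A → ℝ} {R : ℝ} (hR : 0 ≤ R) (hr : ∀ s a, |r s a| ≤ R)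
    (s : S) : |Vf P pol r γ s| ≤ R / (1 - γ) := by
  refine abs_tsum_pow_mul_le hγ0 hγ1 fun t => ?_
  simpa [apply_ite abs] using abs_sum_traj_mul_le hP hpol (fun x => if x = s then 1 else 0) hR hr t

theorem summable_pow_mul_traj (hP : ∀ s a, IsSubprob (P s a)) (hpol : ∀ s, IsSubprob (pol s))
    (hγ0 : 0 ≤ γ) (hγ1 : γ < 1) (ρ0 : S → ℝ) (s : S) (a : A) :
    Summable fun t => γ ^ t * traj P pol ρ0 t s a := by
  refine summable_pow_mul (C := ∑ s, |ρ0 s|) hγ0 hγ1 fun t => ?_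
  calc |traj P pol ρ0 t s a| ≤ ∑ a, |traj P pol ρ0 t s a| :=
        single_le_sum (f := fun a => |traj P pol ρ0 t s a|) (fun _ _ => abs_nonneg _) (mem_univ a)
    _ ≤ ∑ s, ∑ a, |traj P pol ρ0 t s a| :=
        single_le_sum (f := fun s => ∑ a, |traj P pol ρ0 t s a|)
          (fun _ _ => sum_nonneg fun _ _ => abs_nonneg _) (mem_univ s)
    _ ≤ ∑ s, |ρ0 s| := sum_abs_traj_le hP hpol ρ0 t

theorem hasSum_ret (hP : ∀ s a, IsSubprob (P s a)) (hpol : ∀ s, IsSubprob (pol s))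
    (hγ0 : 0 ≤ γ) (hγ1 : γ < 1) (ρ0 : S → ℝ) (r : S → A → ℝ) :
    HasSum (fun t => γ ^ t * ∑ s, ∑ a, traj P pol ρ0 t s a * r s a)
      (∑ s, ∑ a, (∑' t, γ ^ t * traj P pol ρ0 t s a) * r s a) := by
  simp only [mul_sum, ← mul_assoc]
  exact hasSum_sum fun s _ => hasSum_sum fun a _ =>
    (summable_pow_mul_traj hP hpol hγ0 hγ1 ρ0 s a).hasSum.mul_right _

theorem ret_eq_sum_occ (hP : ∀ s a, IsSubprob (P s a)) (hpol : ∀ s, IsSubprob (pol s))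
    (hγ0 : 0 ≤ γ) (hγ1 : γ < 1) (ρ0 : S → ℝ) (r : S → A → ℝ) :
    ret P pol ρ0 r γ = (∑ s, ∑ a, occ P pol ρ0 γ s a * r s a) / (1 - γ) := by
  rw [eq_div_iff (sub_ne_zero.2 hγ1.ne'), ret, (hasSum_ret hP hpol hγ0 hγ1 ρ0 r).tsum_eq]
  simp only [occ, sum_mul]
  exact sum_congr rfl fun s _ => sum_congr rfl fun a _ => by ring

theorem occ_nonneg (hP : ∀ s a s', 0 ≤ P s a s') (hpol : ∀ s a, 0 ≤ pol s a)
    (hγ0 : 0 ≤ γ) (hγ1 : γ ≤ 1) {ρ0 : S → ℝ} (hρ0 : ∀ s, 0 ≤ ρ0 s) (s : S) (a : A) :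
    0 ≤ occ P pol ρ0 γ s a :=
  mul_nonneg (sub_nonneg.2 hγ1) <|
    tsum_nonneg fun t => mul_nonneg (pow_nonneg hγ0 t) (traj_nonneg hP hpol hρ0 t s a)

theorem ret_add_const_mul (hP : ∀ s a, IsSubprob (P s a)) (hpol : ∀ s, IsSubprob (pol s))
    (hγ0 : 0 ≤ γ) (hγ1 : γ < 1) (ρ0 : S → ℝ) (f g : S → A → ℝ) (c : ℝ) :
    ret P pol ρ0 (fun s a => f s a + c * g s a) γ
      = ret P pol ρ0 f γ + c * ret P pol ρ0 g γ := by
  simp only [ret_eq_sum_occ hP hpol hγ0 hγ1, mul_add, mul_left_comm _ c, sum_add_distrib,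
    ← mul_sum, add_div, mul_div_assoc]

theorem ret_eq_sum_mul_Vf [DecidableEq S] (hP : ∀ s a, IsSubprob (P s a))
    (hpol : ∀ s, IsSubprob (pol s)) (hγ0 : 0 ≤ γ) (hγ1 : γ < 1) (ρ0 : S → ℝ) (r : S → A → ℝ) :
    ret P pol ρ0 r γ = ∑ s, ρ0 s * Vf P pol r γ s := by
  have hVf (s0 : S) := (hasSum_ret hP hpol hγ0 hγ1 (fun s => if s = s0 then 1 else 0) r).summable
  have superpose (t : ℕ) : γ ^ t * ∑ s, ∑ a, traj P pol ρ0 t s a * r s a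
      = ∑ s0, ρ0 s0 * (γ ^ t *
          ∑ s, ∑ a, traj P pol (fun s => if s = s0 then 1 else 0) t s a * r s a) := by
    simp only [traj_eq_sum_dirac P pol ρ0, sum_mul, mul_sum, mul_assoc, mul_left_comm (γ ^ t)]
    rw [sum_comm_cycle]
  simp only [ret, Vf, superpose]
  rw [Summable.tsum_finsetSum fun s0 _ => (hVf s0).mul_left (ρ0 s0)]
  simp only [tsum_mul_left]

theorem ret_eq_add_ret_nextDist (hP : ∀ s a, IsSubprob (P s a)) (hpol : ∀ s, IsSubprob (pol s))
    (hγ0 : 0 ≤ γ) (hγ1 : γ < 1) (ρ0 : S → ℝ) (r : S → A → ℝ) :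
    ret P pol ρ0 r γ
      = ∑ s, ρ0 s * ∑ a, pol s a * r s a + γ * ret P pol (nextDist P pol ρ0) r γ := by
  rw [ret, (hasSum_ret hP hpol hγ0 hγ1 ρ0 r).summable.tsum_eq_zero_add, ret, ← tsum_mul_left]
  simp only [traj_zero, traj_succ, pow_zero, one_mul, pow_succ', mul_assoc, mul_sum]

theorem ret_eq_add_ret_successor_reward (hP : ∀ s a, IsSubprob (P s a))
    (hpol : ∀ s, IsSubprob (pol s)) (hγ0 : 0 ≤ γ) (hγ1 : γ < 1) (ρ0 : S → ℝ) (r : S → A → ℝ) :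
    ret P pol ρ0 r γ
      = ∑ s, ρ0 s * ∑ a, pol s a * r s a
        + γ * ret P pol ρ0 (fun s a => ∑ s', P s a s' * ∑ a', pol s' a' * r s' a') γ := by
  have push_reward (t : ℕ) : ∑ s, ∑ a, traj P pol ρ0 (t + 1) s a * r s a
      = ∑ s, ∑ a, traj P pol ρ0 t s a * ∑ s', P s a s' * ∑ a', pol s' a' * r s' a' := by
    simp only [traj_succ', stepDist, mul_assoc, ← mul_sum]
    simp only [sum_mul, mul_assoc]
    simp only [mul_sum _ _ (traj _ _ _ _ _ _)]
    exact sum_comm.trans (sum_congr rfl fun s _ => sum_comm)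
  rw [ret, (hasSum_ret hP hpol hγ0 hγ1 ρ0 r).summable.tsum_eq_zero_add, ret, ← tsum_mul_left]
  simp only [push_reward, traj_zero, pow_zero, one_mul, pow_succ', mul_assoc, mul_sum]

theorem Vf_eq_sum_mul_Qf [DecidableEq S] (hP : ∀ s a, IsSubprob (P s a))
    (hpol : ∀ s, IsSubprob (pol s)) (hγ0 : 0 ≤ γ) (hγ1 : γ < 1) (r : S → A → ℝ) (s : S) :
    Vf P pol r γ s = ∑ a, pol s a * Qf P pol r γ s a := by
  have expected_value : ∑ s', (∑ a, pol s a * P s a s') * Vf P pol r γ s'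
      = ∑ a, pol s a * ∑ s', P s a s' * Vf P pol r γ s' := by
    simp only [sum_mul, mul_sum, mul_assoc]
    exact sum_comm
  rw [Vf, ret_eq_add_ret_nextDist hP hpol hγ0 hγ1, ret_eq_sum_mul_Vf hP hpol hγ0 hγ1]
  simp only [nextDist_dirac, expected_value, Qf, ite_mul, one_mul, zero_mul, sum_ite_eq',
    mem_univ, if_true, mul_add, sum_add_distrib, mul_left_comm _ γ, ← mul_sum]

theorem ret_sub_ret_eq [DecidableEq S] {Phat : S → A → S → ℝ} (hP : ∀ s a, IsSubprob (P s a))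
    (hPhat : ∀ s a, IsSubprob (Phat s a)) (hpol : ∀ s, IsSubprob (pol s))
    (hγ0 : 0 ≤ γ) (hγ1 : γ < 1) (ρ0 : S → ℝ) (r : S → A → ℝ) :
    ret P pol ρ0 r γ - ret Phat pol ρ0 r γ
      = γ * ret Phat pol ρ0
          (fun s a => ∑ s', (P s a s' - Phat s a s') * Vf P pol r γ s') γ := by
  set V := Vf P pol r γ
  have expand_Q : ret Phat pol ρ0 (Qf P pol r γ) γ
      = ret Phat pol ρ0 r γ + γ * ret Phat pol ρ0 (fun s a => ∑ s', P s a s' * V s') γ :=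
    ret_add_const_mul hPhat hpol hγ0 hγ1 ρ0 r _ γ
  have unroll_Q : ret Phat pol ρ0 (Qf P pol r γ) γ
      = ret P pol ρ0 r γ + γ * ret Phat pol ρ0 (fun s a => ∑ s', Phat s a s' * V s') γ := by
    simp only [ret_eq_add_ret_successor_reward hPhat hpol hγ0 hγ1 ρ0 (Qf P pol r γ),
      ← Vf_eq_sum_mul_Qf hP hpol hγ0 hγ1, ret_eq_sum_mul_Vf hP hpol hγ0 hγ1 ρ0 r, V]
  have split_kernels := ret_add_const_mul hPhat hpol hγ0 hγ1 ρ0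
    (fun s a => ∑ s', P s a s' * V s') (fun s a => ∑ s', Phat s a s' * V s') (-1)
  simp only [neg_one_mul, ← sub_eq_add_neg, ← sum_sub_distrib, ← sub_mul] at split_kernels
  rw [split_kernels]
  linarith

theorem abs_ret_le_of_abs_le (hP : ∀ s a, IsSubprob (P s a)) (hpol : ∀ s, IsSubprob (pol s))
    (hγ0 : 0 ≤ γ) (hγ1 : γ < 1) {ρ0 : S → ℝ} (hρ0 : ∀ s, 0 ≤ ρ0 s) {f g : S → A → ℝ}
    (hfg : ∀ s a, |f s a| ≤ g s a) :
    |ret P pol ρ0 f γ| ≤ (∑ s, ∑ a, occ P pol ρ0 γ s a * g s a) / (1 - γ) := by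
  have hocc := occ_nonneg (fun s a => (hP s a).nonneg) (fun s => (hpol s).nonneg) hγ0 hγ1.le hρ0
  have hγ : 0 < 1 - γ := sub_pos.2 hγ1
  rw [ret_eq_sum_occ hP hpol hγ0 hγ1, abs_div, abs_of_pos hγ]
  gcongr
  refine (abs_sum_le_sum_abs _ _).trans (sum_le_sum fun s _ => ?_)
  refine (abs_sum_le_sum_abs _ _).trans (sum_le_sum fun a _ => ?_)
  rw [abs_mul, abs_of_nonneg (hocc s a)]
  exact mul_le_mul_of_nonneg_left (hfg s a) (hocc s a)

theorem return_gap_tv_bound_general {Phat : S → A → S → ℝ} {ρ0 : S → ℝ} {r : S → A → ℝ}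
    {Rmax : ℝ} (hγ0 : 0 ≤ γ) (hγ1 : γ < 1) (hRmax : 0 ≤ Rmax) (hr : ∀ s a, |r s a| ≤ Rmax)
    (hρ0 : ∀ s, 0 ≤ ρ0 s) (hpol : ∀ s, IsSubprob (pol s))
    (hP : ∀ s a, IsSubprob (P s a)) (hPhat : ∀ s a, IsSubprob (Phat s a)) :
    |ret P pol ρ0 r γ - ret Phat pol ρ0 r γ|
      ≤ (2 * γ * Rmax / (1 - γ) ^ 2) *
          ∑ s, ∑ a, occ Phat pol ρ0 γ s a *
            ((1 / 2) * ∑ s', |P s a s' - Phat s a s'|) := by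
  classical
  have value_gap (s : S) (a : A) : |∑ s', (P s a s' - Phat s a s') * Vf P pol r γ s'|
      ≤ Rmax / (1 - γ) * ∑ s', |P s a s' - Phat s a s'| :=
    abs_sum_mul_le (abs_Vf_le hP hpol hγ0 hγ1 hRmax hr)
  rw [ret_sub_ret_eq hP hPhat hpol hγ0 hγ1, abs_mul, abs_of_nonneg hγ0]
  refine (mul_le_mul_of_nonneg_left
    (abs_ret_le_of_abs_le hPhat hpol hγ0 hγ1 hρ0 value_gap) hγ0).trans_eq ?_
  simp only [mul_left_comm (occ _ _ _ _ _ _), ← mul_sum]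
  field_simp

end DecisionProcess

/-- for two finite MDPs differing only in transitions,
`η_M(π) − η_{M̂}(π) ≥ −(2γR_max/(1−γ)²) E_{(s,a)~ρ̂}[D_TV(P(·|s,a), P̂(·|s,a))]`. -/
theorem return_gap_tv_bound
    {S A : Type*} [Fintype S] [Fintype A] [DecidableEq S]
    (P Phat : S → A → S → ℝ) (pol : S → A → ℝ) (ρ0 : S → ℝ)
    (r : S → A → ℝ) (γ Rmax : ℝ)
    (hγ0 : 0 ≤ γ) (hγ1 : γ < 1) (hRmax : 0 ≤ Rmax)
    (hr : ∀ s a, |r s a| ≤ Rmax)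
    (hρ0 : ∀ s, 0 ≤ ρ0 s) (hρ0sum : ∑ s, ρ0 s = 1)
    (hpol : ∀ s a, 0 ≤ pol s a) (hpolsum : ∀ s, ∑ a, pol s a = 1)
    (hP : ∀ s a s', 0 ≤ P s a s') (hPsum : ∀ s a, ∑ s', P s a s' = 1)
    (hPhat : ∀ s a s', 0 ≤ Phat s a s') (hPhatsum : ∀ s a, ∑ s', Phat s a s' = 1) :
    ret P pol ρ0 r γ - ret Phat pol ρ0 r γ
      ≥ -((2 * γ * Rmax / (1 - γ) ^ 2) *
          ∑ s, ∑ a, occ Phat pol ρ0 γ s a *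
            ((1 / 2) * ∑ s', |P s a s' - Phat s a s'|)) := by
  exact neg_le_of_abs_le <| return_gap_tv_bound_general hγ0 hγ1 hRmax hr hρ0
    (fun s => ⟨hpol s, (hpolsum s).le⟩) (fun s a => ⟨hP s a, (hPsum s a).le⟩)
    fun s a => ⟨hPhat s a, (hPhatsum s a).le⟩
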